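/- arXiv:2502.05357 — 3 statements merged into one kernel-verified Lean document; each statement's English description precedes it below -/
import Mathlib

section
/- Let n ≥ 1, let F : ℝⁿ → ℝⁿ be continuously differentiable, let A : ℝⁿ → ℝⁿ be an invertible linear map, let ρ ∈ (0,1), x ∈ ℝⁿ and r > 0, and suppose the Krawczyk condition holds at x with radius r for A and ρ. Let x* be the unique zero of F in B(x,r). Then for any starting point y₀ ∈ B(x,r), the quasi-Newton iterates defined by y_{k+1} = y_k − A(F(y_k)) remain in B(x,r) for all k and satisfy ‖y_k − x*‖ ≤ ρᵏ·‖y₀ − x*‖ for all k; in particular the sequence (y_k) converges to x*. -/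
/-!
The Krawczyk condition says that, for each `z` in the ball `B(x, r)`, the derivative
`L z = id - A ∘ DF(z)` of the step map `g z = z - A (F z)` sends `B(0, r)` into the ball of radius
`ρ * r` about `A (F x) = x - g x`. Comparing opposite points of `B(0, r)` eliminates the centre and
gives `‖L z‖ ≤ ρ`, so `g` contracts towards its fixed points, among them the zeros of `F`.
Integrating `L` from `x` to a point of `B(x, r)` while keeping the centre gives
`‖g z - x‖ ≤ ρ * r`, so `g` preserves `B(x, r)`.
-/

open Filter Metric Set
open scoped Topology

theorem tendsto_of_dist_le_pow_mul {α : Type*} [PseudoMetricSpace α] {y : ℕ → α} {p : α} {ρ c : ℝ}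
    (hρ₀ : 0 ≤ ρ) (hρ₁ : ρ < 1) (h : ∀ k, dist (y k) p ≤ ρ ^ k * c) : Tendsto y atTop (𝓝 p) := by
  rw [tendsto_iff_dist_tendsto_zero]
  refine squeeze_zero (fun _ ↦ dist_nonneg) h ?_
  simpa using (tendsto_pow_atTop_nhds_zero_of_lt_one hρ₀ hρ₁).mul_const c

theorem opNorm_le_of_forall_norm_add_apply_le {E G : Type*} [SeminormedAddCommGroup E]
    [NormedSpace ℝ E] [SeminormedAddCommGroup G] [NormedSpace ℝ G] {T : E →L[ℝ] G} {a : G} {C : ℝ}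
    (h : ∀ u, ‖u‖ ≤ 1 → ‖a + T u‖ ≤ C) : ‖T‖ ≤ C := by
  have hC : 0 ≤ C := (norm_nonneg _).trans (h 0 (by simp))
  refine T.opNorm_le_of_unit_norm hC fun u hu ↦ ?_
  have h_neg : ‖a - T u‖ ≤ C := by simpa [sub_eq_add_neg] using h (-u) (by simp [hu])
  have two_mul_le : 2 * ‖T u‖ ≤ 2 * C :=
    calc
      2 * ‖T u‖ = ‖(a + T u) - (a - T u)‖ := by
        rw [add_sub_sub_cancel, ← two_smul ℝ, norm_smul, Real.norm_two]
      _ ≤ ‖a + T u‖ + ‖a - T u‖ := norm_sub_le _ _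
      _ ≤ 2 * C := by linarith [h u hu.le]
  linarith

section NormedSpace

variable {E G : Type*} [NormedAddCommGroup E] [NormedSpace ℝ E]
  [NormedAddCommGroup G] [NormedSpace ℝ G]

theorem norm_image_sub_sub_le_of_norm_hasFDerivWithinAt_sub_le_segment {f : E → G}
    {f' : E → E →L[ℝ] G} {a b : E} {v : G} {C : ℝ}
    (hf : ∀ z ∈ segment ℝ a b, HasFDerivWithinAt f (f' z) (segment ℝ a b) z)
    (bound : ∀ z ∈ segment ℝ a b, ‖f' z (b - a) - v‖ ≤ C) :
    ‖f b - f a - v‖ ≤ C := by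
  let γ : ℝ → E := AffineMap.lineMap a b
  have hγ : MapsTo γ (Icc 0 1) (segment ℝ a b) := by
    rw [segment_eq_image_lineMap]
    exact mapsTo_image _ _
  have deriv_along : ∀ t ∈ Icc (0 : ℝ) 1,
      HasDerivWithinAt (fun t ↦ f (γ t) - t • v) (f' (γ t) (b - a) - v) (Icc 0 1) t := by
    intro t ht
    have hv : HasDerivWithinAt (fun t : ℝ ↦ t • v) v (Icc 0 1) t := by
      simpa using (hasDerivWithinAt_id t _).smul_const v
    exact ((hf _ (hγ ht)).comp_hasDerivWithinAt t AffineMap.hasDerivWithinAt_lineMap hγ).sub hv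
  have mean_value := norm_image_sub_le_of_norm_deriv_le_segment_01' deriv_along
    fun t ht ↦ bound _ (hγ (Ico_subset_Icc_self ht))
  simpa [γ, sub_right_comm] using mean_value

/-- The step `z ↦ z - A (F z)` of the quasi-Newton iteration for `F`, in which the fixed linear
map `A` plays the role of the inverse of the derivative of `F` in Newton's method. -/
def quasiNewtonStep (F : E → G) (A : G →L[ℝ] E) (z : E) : E :=
  z - A (F z)

/-- The Krawczyk condition at `x` with radius `r`, for the preconditioner `A` and the contraction
rate `ρ`. The derivative of `F` is passed as a separate argument `F'`, so that it only has to be a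
derivative within the ball. -/
def KrawczykCondition (F : E → G) (F' : E → E →L[ℝ] G) (A : G →L[ℝ] E) (ρ : ℝ) (x : E) (r : ℝ) :
    Prop :=
  ∀ z ∈ closedBall x r, ∀ u : E, ‖u‖ ≤ 1 → ‖-A (F x) + r • (u - A (F' z u))‖ ≤ ρ * r

variable {F : E → G} {F' : E → E →L[ℝ] G} {A : G →L[ℝ] E} {ρ r : ℝ} {x z p : E}

theorem quasiNewtonStep_eq_self (hp : F p = 0) : quasiNewtonStep F A p = p := by
  simp [quasiNewtonStep, hp]

theorem hasFDerivWithinAt_quasiNewtonStep {L : E →L[ℝ] G} {s : Set E}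
    (h : HasFDerivWithinAt F L s z) :
    HasFDerivWithinAt (quasiNewtonStep F A) (.id ℝ E - A ∘L L) s z :=
  (hasFDerivWithinAt_id z s).sub (A.hasFDerivAt.comp_hasFDerivWithinAt z h)

namespace KrawczykCondition

theorem norm_id_sub_comp_le (hK : KrawczykCondition F F' A ρ x r) (hr : 0 < r)
    (hz : z ∈ closedBall x r) : ‖.id ℝ E - A ∘L F' z‖ ≤ ρ := by
  have h : ‖r • (.id ℝ E - A ∘L F' z)‖ ≤ ρ * r := opNorm_le_of_forall_norm_add_apply_le (hK z hz)
  rw [norm_smul, Real.norm_of_nonneg hr.le, mul_comm] at h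
  exact le_of_mul_le_mul_right h hr

theorem rate_nonneg (hK : KrawczykCondition F F' A ρ x r) (hr : 0 < r) : 0 ≤ ρ :=
  (norm_nonneg _).trans (hK.norm_id_sub_comp_le hr (mem_closedBall_self hr.le))

theorem norm_id_sub_comp_apply_sub_le (hK : KrawczykCondition F F' A ρ x r) (hr : 0 < r)
    (hz : z ∈ closedBall x r) {v : E} (hv : ‖v‖ ≤ r) :
    ‖(.id ℝ E - A ∘L F' z : E →L[ℝ] E) v - A (F x)‖ ≤ ρ * r := by
  have norm_le_one : ‖r⁻¹ • v‖ ≤ 1 := by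
    rwa [norm_smul, norm_inv, Real.norm_of_nonneg hr.le, inv_mul_le_one₀ hr]
  simpa [smul_sub, smul_inv_smul₀ hr.ne', neg_add_eq_sub] using hK z hz _ norm_le_one

theorem norm_quasiNewtonStep_sub_le (hK : KrawczykCondition F F' A ρ x r) (hr : 0 < r)
    (hF : ∀ z ∈ closedBall x r, HasFDerivWithinAt F (F' z) (closedBall x r) z)
    {w : E} (hz : z ∈ closedBall x r) (hw : w ∈ closedBall x r) :
    ‖quasiNewtonStep F A z - quasiNewtonStep F A w‖ ≤ ρ * ‖z - w‖ :=
  (convex_closedBall x r).norm_image_sub_le_of_norm_hasFDerivWithin_le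
    (fun c hc ↦ hasFDerivWithinAt_quasiNewtonStep (hF c hc))
    (fun _ hc ↦ hK.norm_id_sub_comp_le hr hc) hw hz

theorem mapsTo_quasiNewtonStep (hK : KrawczykCondition F F' A ρ x r) (hr : 0 < r)
    (hF : ∀ z ∈ closedBall x r, HasFDerivWithinAt F (F' z) (closedBall x r) z) :
    MapsTo (quasiNewtonStep F A) (closedBall x r) (closedBall x (ρ * r)) := by
  intro z hz
  have segment_subset : segment ℝ x z ⊆ closedBall x r :=
    (convex_closedBall x r).segment_subset (mem_closedBall_self hr.le) hz
  have mean_value : ‖quasiNewtonStep F A z - quasiNewtonStep F A x - A (F x)‖ ≤ ρ * r :=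
    norm_image_sub_sub_le_of_norm_hasFDerivWithinAt_sub_le_segment
      (fun w hw ↦ hasFDerivWithinAt_quasiNewtonStep
        ((hF w (segment_subset hw)).mono segment_subset))
      (fun w hw ↦ hK.norm_id_sub_comp_apply_sub_le hr (segment_subset hw)
        (mem_closedBall_iff_norm.mp hz))
  have step_sub_centre : quasiNewtonStep F A z - x =
      quasiNewtonStep F A z - quasiNewtonStep F A x - A (F x) := by
    simp only [quasiNewtonStep]
    abel
  rwa [mem_closedBall_iff_norm, step_sub_centre]

end KrawczykCondition

theorem quasiNewton_iterates_converge_general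
    (hF : ∀ z ∈ closedBall x r, HasFDerivWithinAt F (F' z) (closedBall x r) z)
    (hρ : ρ < 1) (hr : 0 < r) (hK : KrawczykCondition F F' A ρ x r)
    (hp : p ∈ closedBall x r) (hFp : F p = 0)
    {y : ℕ → E} (hy₀ : y 0 ∈ closedBall x r) (hy : ∀ k, y (k + 1) = quasiNewtonStep F A (y k)) :
    (∀ k, y k ∈ closedBall x r ∧ ‖y k - p‖ ≤ ρ ^ k * ‖y 0 - p‖) ∧ Tendsto y atTop (𝓝 p) := by
  have hρ₀ : 0 ≤ ρ := hK.rate_nonneg hr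
  have mem_ball : ∀ k, y k ∈ closedBall x r := by
    intro k
    induction k with
    | zero => exact hy₀
    | succ k ih =>
      rw [hy]
      exact closedBall_subset_closedBall (mul_le_of_le_one_left hr.le hρ.le)
        (hK.mapsTo_quasiNewtonStep hr hF ih)
  have contraction : ∀ k, ‖y (k + 1) - p‖ ≤ ρ * ‖y k - p‖ := by
    intro k
    simpa only [hy, quasiNewtonStep_eq_self hFp] using
      hK.norm_quasiNewtonStep_sub_le hr hF (mem_ball k) hp
  have geometric : ∀ k, ‖y k - p‖ ≤ ρ ^ k * ‖y 0 - p‖ := fun k ↦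
    le_geom (u := fun k ↦ ‖y k - p‖) hρ₀ k fun j _ ↦ contraction j
  have tendsto : Tendsto y atTop (𝓝 p) :=
    tendsto_of_dist_le_pow_mul hρ₀ hρ fun k ↦ (dist_eq_norm (y k) p).trans_le (geometric k)
  exact ⟨fun k ↦ ⟨mem_ball k, geometric k⟩, tendsto⟩

end NormedSpace

/-- Under the Krawczyk condition with invertible `A`, the quasi-Newton iteration
`y_{k+1} = y_k − A(F(y_k))` starting anywhere in `B(x,r)` stays in `B(x,r)`,
converges to the unique zero `x*` of `F` in `B(x,r)`, and satisfies
`‖y_k − x*‖ ≤ ρᵏ·‖y₀ − x*‖`. -/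
theorem quasiNewton_iterates_converge
    (n : ℕ) (hn : 1 ≤ n)
    (F : (Fin n → ℝ) → (Fin n → ℝ)) (hF : ContDiff ℝ 1 F)
    (A : (Fin n → ℝ) ≃L[ℝ] (Fin n → ℝ))
    (ρ : ℝ) (hρ : ρ ∈ Set.Ioo (0 : ℝ) 1)
    (x : Fin n → ℝ) (r : ℝ) (hr : 0 < r)
    (hK : ∀ z ∈ Metric.closedBall x r, ∀ u : Fin n → ℝ, ‖u‖ ≤ 1 →
      ‖-A (F x) + r • (u - A ((fderiv ℝ F z) u))‖ ≤ ρ * r)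
    (xs : Fin n → ℝ) (hxs : xs ∈ Metric.closedBall x r) (hFxs : F xs = 0)
    (hxs_unique : ∀ y ∈ Metric.closedBall x r, F y = 0 → y = xs)
    (y : ℕ → (Fin n → ℝ))
    (hy0 : y 0 ∈ Metric.closedBall x r)
    (hy : ∀ k : ℕ, y (k + 1) = y k - A (F (y k))) :
    (∀ k : ℕ, y k ∈ Metric.closedBall x r ∧ ‖y k - xs‖ ≤ ρ ^ k * ‖y 0 - xs‖) ∧
    Filter.Tendsto y Filter.atTop (nhds xs) :=
  quasiNewton_iterates_converge_general (A := (A : (Fin n → ℝ) →L[ℝ] (Fin n → ℝ)))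
    (fun z _ ↦ (hF.differentiable one_ne_zero z).hasFDerivAt.hasFDerivWithinAt)
    hρ.2 hr hK hxs hFxs hy0 hy
end

section
/- Let n ≥ 1, let F : ℝⁿ × ℝ → ℝⁿ be continuously differentiable, and write D₁F(z,a) : ℝⁿ → ℝⁿ for the partial derivative of F in its first argument at (z,a). Let A : ℝⁿ → ℝⁿ be an invertible linear map, ρ ∈ (0,1), x ∈ ℝⁿ, a₀ ∈ ℝ, and r, s > 0. Suppose that for every a ∈ [a₀ − s, a₀ + s], every z ∈ B(x,r) and every u ∈ ℝⁿ with ‖u‖ ≤ 1, one has ‖−A(F(x,a)) + r·(u − A(D₁F(z,a)(u)))‖ ≤ ρ·r. Then for every a ∈ [a₀ − s, a₀ + s] there exists a unique point ξ(a) ∈ B(x,r) with F(ξ(a), a) = 0, and moreover ‖x − ξ(a)‖ ≤ ρ·r. -/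
/-!
Since `A` is injective, the zeros of `f` are the fixed points of the quasi-Newton map
`g z = z - A (f z)`, and the Krawczyk condition reads `‖(g x - x) + r • g' z u‖ ≤ ρ * r` for `u` in
the unit ball. Comparing `u` with `-u` removes the term `g x - x` and gives `‖g' z‖ ≤ ρ`, so `g` is
a contraction on the ball. Integrating `(g x - x) + g' z (y - x)` along the segment from `x` to `y`
gives `‖g y - x‖ ≤ ρ * r`, so `g` maps the ball into itself, and Banach's fixed point theorem
applies.
-/

open Function Metric Set
open scoped NNReal

theorem existsUnique_isFixedPt_of_lipschitzOnWith {α : Type*} [MetricSpace α] {g : α → α}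
    {s : Set α} {K : ℝ≥0} (hg : LipschitzOnWith K g s) (hK : K < 1) (hs : IsComplete s)
    (hne : s.Nonempty) (hmaps : MapsTo g s s) : ∃! ξ, ξ ∈ s ∧ IsFixedPt g ξ := by
  have : CompleteSpace s := hs.completeSpace_coe
  have : Nonempty s := hne.to_subtype
  have hcontr : ContractingWith K (hmaps.restrict g s s) := ⟨hK, hg.mapsToRestrict hmaps⟩
  refine ⟨hcontr.fixedPoint, ⟨Subtype.property _, congrArg Subtype.val hcontr.fixedPoint_isFixedPt⟩,
    fun y ⟨hys, hy⟩ => ?_⟩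
  exact congrArg Subtype.val (hcontr.fixedPoint_unique (x := ⟨y, hys⟩) (Subtype.ext hy))

section

variable {E G : Type*} [NormedAddCommGroup E] [NormedSpace ℝ E]
  [NormedAddCommGroup G] [NormedSpace ℝ G]

theorem opNorm_le_of_norm_add_smul_le {L : E →L[ℝ] G} {v : G} {r ρ : ℝ} (hr : 0 < r)
    (h : ∀ u, ‖u‖ ≤ 1 → ‖v + r • L u‖ ≤ ρ * r) : ‖L‖ ≤ ρ := by
  have hρ : 0 ≤ ρ := nonneg_of_mul_nonneg_left ((norm_nonneg _).trans (h 0 (by simp))) hr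
  have h2r : 0 < 2 * r := by positivity
  refine L.opNorm_le_of_unit_norm hρ fun u hu => le_of_mul_le_mul_left ?_ h2r
  have hneg : ‖v - r • L u‖ ≤ ρ * r := by
    simpa [sub_eq_add_neg] using h (-u) (by rw [norm_neg, hu])
  calc 2 * r * ‖L u‖ = ‖(2 * r) • L u‖ := by rw [norm_smul, Real.norm_of_nonneg h2r.le]
    _ = ‖(v + r • L u) - (v - r • L u)‖ := by congr 1; module
    _ ≤ ρ * r + ρ * r := norm_sub_le_of_le (h u hu.le) hneg
    _ = 2 * r * ρ := by ring

theorem norm_add_image_sub_le_of_norm_add_hasFDerivWithin_le {f : E → G} {f' : E → E →L[ℝ] G}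
    {s : Set E} {x y : E} {v : G} {C : ℝ} (hs : Convex ℝ s)
    (hf : ∀ z ∈ s, HasFDerivWithinAt f (f' z) s z) (hx : x ∈ s) (hy : y ∈ s)
    (bound : ∀ z ∈ s, ‖v + f' z (y - x)‖ ≤ C) : ‖v + (f y - f x)‖ ≤ C := by
  let γ : ℝ → E := AffineMap.lineMap x y
  have hγ : MapsTo γ (Icc 0 1) s := hs.mapsTo_lineMap hx hy
  have hderiv : ∀ t ∈ Icc (0 : ℝ) 1, HasDerivWithinAt (fun t => t • v + f (γ t))
      (v + f' (γ t) (y - x)) (Icc 0 1) t := by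
    intro t ht
    have hv : HasDerivWithinAt (fun t : ℝ => t • v) v (Icc 0 1) t := by
      simpa using (hasDerivWithinAt_id t _).smul_const v
    exact hv.add
      ((hf _ (hγ ht)).comp_hasDerivWithinAt t AffineMap.hasDerivWithinAt_lineMap hγ)
  have hmean := norm_image_sub_le_of_norm_deriv_le_segment_01' hderiv
    fun t ht => bound _ (hγ (Ico_subset_Icc_self ht))
  simpa [γ, add_sub_assoc] using hmean

section FixedPoint

variable {g : E → E} {g' : E → E →L[ℝ] E} {x : E} {r ρ : ℝ}

theorem mapsTo_closedBall_of_norm_add_smul_le (hr : 0 < r)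
    (hg : ∀ z ∈ closedBall x r, HasFDerivWithinAt g (g' z) (closedBall x r) z)
    (h : ∀ z ∈ closedBall x r, ∀ u, ‖u‖ ≤ 1 → ‖(g x - x) + r • g' z u‖ ≤ ρ * r) :
    MapsTo g (closedBall x r) (closedBall x (ρ * r)) := by
  intro y hy
  have hu : ‖r⁻¹ • (y - x)‖ ≤ 1 := by
    rw [norm_smul, Real.norm_of_nonneg (by positivity), inv_mul_le_one₀ hr]
    exact mem_closedBall_iff_norm.1 hy
  have hsegment : ∀ z ∈ closedBall x r, ‖(g x - x) + g' z (y - x)‖ ≤ ρ * r := fun z hz => by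
    simpa [smul_smul, hr.ne'] using h z hz _ hu
  have hmean := norm_add_image_sub_le_of_norm_add_hasFDerivWithin_le (convex_closedBall x r) hg
    (mem_closedBall_self hr.le) hy hsegment
  rwa [sub_add_sub_cancel', ← mem_closedBall_iff_norm] at hmean

theorem existsUnique_isFixedPt_of_norm_add_smul_le [CompleteSpace E] (hr : 0 < r) (hρ : ρ < 1)
    (hg : ∀ z ∈ closedBall x r, HasFDerivWithinAt g (g' z) (closedBall x r) z)
    (h : ∀ z ∈ closedBall x r, ∀ u, ‖u‖ ≤ 1 → ‖(g x - x) + r • g' z u‖ ≤ ρ * r) :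
    ∃! ξ, ξ ∈ closedBall x r ∧ IsFixedPt g ξ := by
  have hx : x ∈ closedBall x r := mem_closedBall_self hr.le
  have hg' : ∀ z ∈ closedBall x r, ‖g' z‖ ≤ ρ := fun z hz =>
    opNorm_le_of_norm_add_smul_le hr (h z hz)
  lift ρ to ℝ≥0 using (norm_nonneg _).trans (hg' x hx)
  have hball : closedBall x (ρ * r) ⊆ closedBall x r :=
    closedBall_subset_closedBall (mul_le_of_le_one_left hr.le hρ.le)
  exact existsUnique_isFixedPt_of_lipschitzOnWith
    ((convex_closedBall x r).lipschitzOnWith_of_nnnorm_hasFDerivWithin_le hg hg')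
    hρ isClosed_closedBall.isComplete ⟨x, hx⟩
    ((mapsTo_closedBall_of_norm_add_smul_le hr hg h).mono_right hball)

end FixedPoint

/-- The quasi-Newton map of `f`: the Newton step with the inverse of the derivative of `f` replaced
by a fixed preconditioner `A`, so that zeros of `f` become fixed points. -/
def quasiNewtonMap (A : G →L[ℝ] E) (f : E → G) (z : E) : E :=
  z - A (f z)

theorem isFixedPt_quasiNewtonMap_iff {A : G →L[ℝ] E} (hA : Injective A) {f : E → G} {z : E} :
    IsFixedPt (quasiNewtonMap A f) z ↔ f z = 0 := by
  rw [IsFixedPt, quasiNewtonMap, sub_eq_self, map_eq_zero_iff A hA]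

theorem hasFDerivWithinAt_quasiNewtonMap {A : G →L[ℝ] E} {f : E → G} {f' : E →L[ℝ] G} {s : Set E}
    {z : E} (hf : HasFDerivWithinAt f f' s z) :
    HasFDerivWithinAt (quasiNewtonMap A f) (ContinuousLinearMap.id ℝ E - A.comp f') s z :=
  (hasFDerivWithinAt_id z s).sub (A.hasFDerivAt.comp_hasFDerivWithinAt z hf)

theorem hasFDerivAt_comp_prodMk_left {P : Type*} [NormedAddCommGroup P]
    [NormedSpace ℝ P] {F : E × P → G} {z : E} {a : P} (hF : DifferentiableAt ℝ F (z, a)) :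
    HasFDerivAt (fun w => F (w, a)) ((fderiv ℝ F (z, a)).comp (.inl ℝ E P)) z :=
  hF.hasFDerivAt.comp z (hasFDerivAt_prodMk_left z a)

theorem krawczyk_parametric_exists_unique_general {P : Type*} [CompleteSpace E]
    {F : E × P → G} {D₁F : E × P → E →L[ℝ] G} {A : G →L[ℝ] E} {S : Set P} {x : E} {r ρ : ℝ}
    (hF : ∀ a ∈ S, ∀ z ∈ closedBall x r,
      HasFDerivWithinAt (fun w => F (w, a)) (D₁F (z, a)) (closedBall x r) z)
    (hA : Injective A) (hρ : ρ < 1) (hr : 0 < r)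
    (hK : ∀ a ∈ S, ∀ z ∈ closedBall x r, ∀ u : E, ‖u‖ ≤ 1 →
      ‖-A (F (x, a)) + r • (u - A (D₁F (z, a) u))‖ ≤ ρ * r) :
    ∀ a ∈ S, ∃ ξ ∈ closedBall x r,
      F (ξ, a) = 0 ∧ ‖x - ξ‖ ≤ ρ * r ∧ ∀ y ∈ closedBall x r, F (y, a) = 0 → y = ξ := by
  intro a ha
  let g := quasiNewtonMap A fun z => F (z, a)
  let g' := fun z => ContinuousLinearMap.id ℝ E - A.comp (D₁F (z, a))
  have hg : ∀ z ∈ closedBall x r, HasFDerivWithinAt g (g' z) (closedBall x r) z := fun z hz =>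
    hasFDerivWithinAt_quasiNewtonMap (hF a ha z hz)
  have hbound : ∀ z ∈ closedBall x r, ∀ u, ‖u‖ ≤ 1 → ‖(g x - x) + r • g' z u‖ ≤ ρ * r := by
    simpa [g, g', quasiNewtonMap] using hK a ha
  have hzero {z : E} : IsFixedPt g z ↔ F (z, a) = 0 := isFixedPt_quasiNewtonMap_iff hA
  obtain ⟨ξ, ⟨hξ, hfix⟩, hunique⟩ := existsUnique_isFixedPt_of_norm_add_smul_le hr hρ hg hbound
  refine ⟨ξ, hξ, hzero.1 hfix, ?_, fun y hy hy0 => hunique y ⟨hy, hzero.2 hy0⟩⟩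
  rw [← mem_closedBall_iff_norm', ← hfix.eq]
  exact mapsTo_closedBall_of_norm_add_smul_le hr hg hbound hξ

end

/-- **Parametric Krawczyk theorem.** If the Krawczyk condition (in the first
variable) holds uniformly over `a ∈ [a₀ − s, a₀ + s]`, then for each such `a`
there is a unique point `ξ(a) ∈ B(x,r)` with `F(ξ(a), a) = 0`, and it satisfies
`‖x − ξ(a)‖ ≤ ρ·r`. -/
theorem krawczyk_parametric_exists_unique
    (n : ℕ) (hn : 1 ≤ n)
    (F : (Fin n → ℝ) × ℝ → (Fin n → ℝ)) (hF : ContDiff ℝ 1 F)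
    (A : (Fin n → ℝ) ≃L[ℝ] (Fin n → ℝ))
    (ρ : ℝ) (hρ : ρ ∈ Set.Ioo (0 : ℝ) 1)
    (x : Fin n → ℝ) (a₀ : ℝ) (r s : ℝ) (hr : 0 < r) (hs : 0 < s)
    (hK : ∀ a ∈ Set.Icc (a₀ - s) (a₀ + s), ∀ z ∈ Metric.closedBall x r,
      ∀ u : Fin n → ℝ, ‖u‖ ≤ 1 →
      ‖-A (F (x, a)) + r • (u - A ((fderiv ℝ F (z, a)) (u, 0)))‖ ≤ ρ * r) :
    ∀ a ∈ Set.Icc (a₀ - s) (a₀ + s),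
      ∃ ξ ∈ Metric.closedBall x r,
        F (ξ, a) = 0 ∧ ‖x - ξ‖ ≤ ρ * r ∧
        ∀ y ∈ Metric.closedBall x r, F (y, a) = 0 → y = ξ :=
  krawczyk_parametric_exists_unique_general
    (D₁F := fun p => (fderiv ℝ F p).comp (.inl ℝ _ ℝ)) (A := A.toContinuousLinearMap)
    (fun _ _ _ _ => (hasFDerivAt_comp_prodMk_left
      (hF.differentiable one_ne_zero _)).hasFDerivWithinAt) A.injective hρ.2 hr hK
end

section
/- Let n ≥ 1, let F : ℝⁿ × ℝ → ℝⁿ be continuously differentiable, and write D₁F(z,a) : ℝⁿ → ℝⁿ for the partial derivative of F in its first argument at (z,a). Let A : ℝⁿ → ℝⁿ be an invertible linear map, ρ ∈ (0,1), x ∈ ℝⁿ, a₀ ∈ ℝ, and r, s > 0. Suppose that for every a ∈ [a₀ − s, a₀ + s], every z ∈ B(x,r) and every u ∈ ℝⁿ with ‖u‖ ≤ 1, one has ‖−A(F(x,a)) + r·(u − A(D₁F(z,a)(u)))‖ ≤ ρ·r, and for each a ∈ [a₀ − s, a₀ + s] let ξ(a) denote the unique point of B(x,r) with F(ξ(a),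 a) = 0. Then the map a ↦ ξ(a) is continuous on [a₀ − s, a₀ + s]. -/
/-!
Zeros of `F (·, a)` are fixed points of `z ↦ z - A (F (z, a))`. In the Krawczyk condition `u` and
`-u` give two vectors of norm at most `ρ * r` that are symmetric about `-A (F (x, a))`, so half
their difference shows that the derivative `1 - A ∘ D₁F (z, a)` of this map has norm at most
`ρ < 1`. Hence these maps contract uniformly on `B(x, r)`, and the fixed point of a uniformly
contracting family depends continuously on the parameter.
-/

open Filter Function Metric Set
open scoped NNReal Topology

section FixedPoint

variable {P X : Type*} [PseudoMetricSpace X] {K : ℝ≥0} {s : Set X}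

theorem dist_le_div_of_lipschitzOnWith_of_isFixedPt {T : X → X} (hK : K < 1)
    (hT : LipschitzOnWith K T s) {y z : X} (hy : y ∈ s) (hz : z ∈ s) (hfix : IsFixedPt T z) :
    dist y z ≤ dist y (T y) / (1 - K) := by
  have hK' : (0 : ℝ) < 1 - K := sub_pos.2 (mod_cast hK)
  have hdist : dist y z ≤ dist y (T y) + K * dist y z :=
    calc dist y z ≤ dist y (T y) + dist (T y) z := dist_triangle _ _ _
      _ = dist y (T y) + dist (T y) (T z) := by rw [hfix.eq]
      _ ≤ dist y (T y) + K * dist y z := by gcongr; exact hT.dist_le_mul y hy z hz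
  rw [le_div_iff₀ hK']
  linarith

theorem continuousOn_of_lipschitzOnWith_of_isFixedPt [TopologicalSpace P] {T : P → X → X}
    {t : Set P} {ξ : P → X} (hK : K < 1) (hT : ∀ a ∈ t, LipschitzOnWith K (T a) s)
    (hTcont : ∀ y ∈ s, ContinuousOn (fun a ↦ T a y) t) (hξ : MapsTo ξ t s)
    (hfix : ∀ a ∈ t, IsFixedPt (T a) (ξ a)) : ContinuousOn ξ t := by
  intro a ha
  have hbound : ∀ᶠ b in 𝓝[t] a, dist (ξ b) (ξ a) ≤ dist (ξ a) (T b (ξ a)) / (1 - K) := by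
    filter_upwards [self_mem_nhdsWithin] with b hb
    rw [dist_comm]
    exact dist_le_div_of_lipschitzOnWith_of_isFixedPt hK (hT b hb) (hξ ha) (hξ hb) (hfix b hb)
  have hlim : Tendsto (fun b ↦ dist (ξ a) (T b (ξ a)) / (1 - K)) (𝓝[t] a) (𝓝 0) := by
    have h : ContinuousWithinAt (fun b ↦ dist (ξ a) (T b (ξ a)) / (1 - K)) t a :=
      (continuousWithinAt_const.dist (hTcont (ξ a) (hξ ha) a ha)).div_const _
    rwa [ContinuousWithinAt, (hfix a ha).eq, dist_self, zero_div] at h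
  exact tendsto_iff_dist_tendsto_zero.2
    (squeeze_zero' (.of_forall fun _ ↦ dist_nonneg) hbound hlim)

end FixedPoint

theorem norm_le_of_norm_add_le_of_norm_sub_le {E : Type*} [SeminormedAddCommGroup E]
    [NormedSpace ℝ E] {c v : E} {C : ℝ} (hadd : ‖c + v‖ ≤ C) (hsub : ‖c - v‖ ≤ C) : ‖v‖ ≤ C := by
  have h : 2 * ‖v‖ ≤ C + C :=
    calc 2 * ‖v‖ = ‖(2 : ℝ) • v‖ := by rw [norm_smul, Real.norm_two]
      _ = ‖(c + v) - (c - v)‖ := by congr 1; module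
      _ ≤ C + C := norm_sub_le_of_le hadd hsub
  linarith

theorem opNorm_le_of_norm_add_smul_apply_le {𝕜 E H : Type*} [NontriviallyNormedField 𝕜]
    [NormedAlgebra ℝ 𝕜] [SeminormedAddCommGroup E] [NormedSpace 𝕜 E] [SeminormedAddCommGroup H]
    [NormedSpace 𝕜 H] [NormedSpace ℝ H] {L : E →L[𝕜] H} {c : H} {r ρ : ℝ} (hr : 0 < r)
    (h : ∀ u, ‖u‖ ≤ 1 → ‖c + r • L u‖ ≤ ρ * r) : ‖L‖ ≤ ρ := by
  have hρ : 0 ≤ ρ :=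
    nonneg_of_mul_nonneg_left ((norm_nonneg _).trans (h 0 (norm_zero.trans_le zero_le_one))) hr
  refine ContinuousLinearMap.opNorm_le_of_unit_norm hρ fun u hu ↦ ?_
  have hsub : ‖c - r • L u‖ ≤ ρ * r := by
    simpa only [map_neg, smul_neg, ← sub_eq_add_neg] using h (-u) ((norm_neg u).trans_le hu.le)
  have hsmul : ‖r • L u‖ ≤ ρ * r := norm_le_of_norm_add_le_of_norm_sub_le (h u hu.le) hsub
  rw [norm_smul, Real.norm_of_nonneg hr.le, mul_comm] at hsmul
  exact le_of_mul_le_mul_right hsmul hr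

section Krawczyk

variable {𝕜 E G : Type*} [RCLike 𝕜] [NormedAddCommGroup E] [NormedSpace 𝕜 E]
  [NormedAddCommGroup G] [NormedSpace 𝕜 G]

/-- The simplified Newton map for `f`, in which a fixed linear map `A` replaces the inverse of the
derivative. Its fixed points are the zeros of `f` when `A` is injective. -/
def newtonMap (A : G →L[𝕜] E) (f : E → G) (z : E) : E :=
  z - A (f z)

variable {A : G →L[𝕜] E} {f : E → G} {f' : E → E →L[𝕜] G} {x z : E} {r ρ : ℝ}

theorem isFixedPt_newtonMap_of_eq_zero (hz : f z = 0) : IsFixedPt (newtonMap A f) z := by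
  rw [IsFixedPt, newtonMap, hz, map_zero, sub_zero]

variable [NormedSpace ℝ E]

/-- The Krawczyk condition on `B(x, r)` with constant `ρ`: the Krawczyk operator
`x - A (f x) + (1 - A ∘ f' z) (B(0, r))` takes values in `B(x, ρ * r)` for every `z ∈ B(x, r)`,
where `f' z` stands for the derivative of `f` at `z`. The centre `x` is subtracted from both sides,
and `B(0, r)` is written as `r` times the unit ball. -/
def KrawczykBound (A : G →L[𝕜] E) (f : E → G) (f' : E → E →L[𝕜] G) (x : E) (r ρ : ℝ) : Prop :=
  ∀ z ∈ closedBall x r, ∀ u : E, ‖u‖ ≤ 1 → ‖-A (f x) + r • (u - A (f' z u))‖ ≤ ρ * r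

theorem KrawczykBound.norm_id_sub_comp_le (hK : KrawczykBound A f f' x r ρ) (hr : 0 < r)
    (hz : z ∈ closedBall x r) : ‖ContinuousLinearMap.id 𝕜 E - A ∘L f' z‖ ≤ ρ :=
  opNorm_le_of_norm_add_smul_apply_le hr (hK z hz)

theorem KrawczykBound.lipschitzOnWith_newtonMap (hK : KrawczykBound A f f' x r ρ) (hr : 0 < r)
    (hf : ∀ z ∈ closedBall x r, HasFDerivWithinAt f (f' z) (closedBall x r) z) :
    LipschitzOnWith ρ.toNNReal (newtonMap A f) (closedBall x r) := by
  have hderiv : ∀ z ∈ closedBall x r, HasFDerivWithinAt (newtonMap A f)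
      (ContinuousLinearMap.id 𝕜 E - A ∘L f' z) (closedBall x r) z := fun z hz ↦
    (hasFDerivWithinAt_id z _).sub (A.hasFDerivAt.comp_hasFDerivWithinAt z (hf z hz))
  refine LipschitzOnWith.of_dist_le' fun y hy z hz ↦ ?_
  simpa only [dist_eq_norm] using
    (convex_closedBall x r).norm_image_sub_le_of_norm_hasFDerivWithin_le hderiv
      (fun w hw ↦ hK.norm_id_sub_comp_le hr hw) hz hy

theorem krawczyk_parametric_solution_continuous_general {P : Type*} [TopologicalSpace P]
    {f : P → E → G} {f' : P → E → E →L[𝕜] G} {t : Set P} {ξ : P → E} (hρ : ρ < 1) (hr : 0 < r)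
    (hf' : ∀ a ∈ t, ∀ z ∈ closedBall x r, HasFDerivWithinAt (f a) (f' a z) (closedBall x r) z)
    (hf : ∀ z ∈ closedBall x r, ContinuousOn (fun a ↦ f a z) t)
    (hK : ∀ a ∈ t, KrawczykBound A (f a) (f' a) x r ρ)
    (hξ : ∀ a ∈ t, ξ a ∈ closedBall x r ∧ f a (ξ a) = 0) : ContinuousOn ξ t :=
  continuousOn_of_lipschitzOnWith_of_isFixedPt (T := fun a ↦ newtonMap A (f a))
    (Real.toNNReal_lt_one.2 hρ) (fun a ha ↦ (hK a ha).lipschitzOnWith_newtonMap hr (hf' a ha))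
    (fun z hz ↦ continuousOn_const.sub (A.continuous.comp_continuousOn (hf z hz)))
    (fun a ha ↦ (hξ a ha).1) fun a ha ↦ isFixedPt_newtonMap_of_eq_zero (hξ a ha).2

end Krawczyk

/-- **Continuity of the implicitly defined solution.** Under the uniform
parametric Krawczyk condition over `[a₀ − s, a₀ + s]`, if `ξ(a)` denotes the
unique zero of `F(·, a)` in `B(x,r)`, then `a ↦ ξ(a)` is continuous on
`[a₀ − s, a₀ + s]`. -/
theorem krawczyk_parametric_solution_continuous
    (n : ℕ) (hn : 1 ≤ n)
    (F : (Fin n → ℝ) × ℝ → (Fin n → ℝ)) (hF : ContDiff ℝ 1 F)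
    (A : (Fin n → ℝ) ≃L[ℝ] (Fin n → ℝ))
    (ρ : ℝ) (hρ : ρ ∈ Set.Ioo (0 : ℝ) 1)
    (x : Fin n → ℝ) (a₀ : ℝ) (r s : ℝ) (hr : 0 < r) (hs : 0 < s)
    (hK : ∀ a ∈ Set.Icc (a₀ - s) (a₀ + s), ∀ z ∈ Metric.closedBall x r,
      ∀ u : Fin n → ℝ, ‖u‖ ≤ 1 →
      ‖-A (F (x, a)) + r • (u - A ((fderiv ℝ F (z, a)) (u, 0)))‖ ≤ ρ * r)
    (ξ : ℝ → (Fin n → ℝ))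
    (hξ : ∀ a ∈ Set.Icc (a₀ - s) (a₀ + s),
      ξ a ∈ Metric.closedBall x r ∧ F (ξ a, a) = 0) :
    ContinuousOn ξ (Set.Icc (a₀ - s) (a₀ + s)) := by
  have hderiv : ∀ a z, HasFDerivAt (fun y ↦ F (y, a))
      (fderiv ℝ F (z, a) ∘L ContinuousLinearMap.inl ℝ (Fin n → ℝ) ℝ) z := fun a z ↦
    (hF.differentiable one_ne_zero (z, a)).hasFDerivAt.comp z (hasFDerivAt_prodMk_left z a)
  exact krawczyk_parametric_solution_continuous_general (A := (A : (Fin n → ℝ) →L[ℝ] Fin n → ℝ))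
    hρ.2 hr (fun a _ z _ ↦ (hderiv a z).hasFDerivWithinAt)
    (fun z _ ↦ (hF.continuous.comp (Continuous.prodMk_right z)).continuousOn) hK hξ
end
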